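/- arXiv:2507.16730 — 2 statements merged into one kernel-verified Lean document; each statement's English description precedes it below -/
import Mathlib

section
/- For every m ≥ 2 and every hierarchy S of size m, letting H_n denote the number of isomorphism classes of hierarchies of size n and H^{(m)}_n the number of isomorphism classes of hierarchies of size n containing no subhierarchy isomorphic to S, one has lim_{n→∞} H^{(m)}_n / H_n = 0. -/
/-- Finite rooted unordered trees, presented with an ordered list of children
(unorderedness is taken care of by the isomorphism relation `RTree.Iso`). -/
inductive RTree : Type
  | node : List RTree → RTree

/-- The number of leaves (external vertices) of a rooted tree: the *size* of a hierarchy. -/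
def RTree.leaves : RTree → ℕ
  | .node [] => 1
  | .node (a :: l) => ((a :: l).attach.map (fun x => RTree.leaves x.1)).sum
decreasing_by
  have := List.sizeOf_lt_of_mem x.2
  simp only [RTree.node.sizeOf_spec]
  omega

/-- A hierarchy: a rooted tree in which no vertex has exactly one child. -/
inductive RTree.IsHierarchy : RTree → Prop
  | node {l : List RTree} : l.length ≠ 1 → (∀ t ∈ l, RTree.IsHierarchy t) →
      RTree.IsHierarchy (.node l)

/-- `s.SubtreeOf t` : `s` is the subtree of `t` rooted at some vertex of `t`
(that vertex together with all of its descendants). -/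
inductive RTree.SubtreeOf : RTree → RTree → Prop
  | refl (t : RTree) : RTree.SubtreeOf t t
  | child {s c : RTree} {l : List RTree} : c ∈ l → RTree.SubtreeOf s c →
      RTree.SubtreeOf s (.node l)

/-- Isomorphism of rooted unordered trees: the children of the two roots can be
matched up bijectively by isomorphisms. -/
inductive RTree.Iso : RTree → RTree → Prop
  | node {l₁ l l₂ : List RTree} (h₁ : List.Forall₂ RTree.Iso l₁ l) (h₂ : l.Perm l₂) :
      RTree.Iso (.node l₁) (.node l₂)

/-- The number of isomorphism classes of hierarchies of size `n` (OEIS A000669). -/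
noncomputable def hierarchyCount (n : ℕ) : ℕ :=
  Nat.card (Quot fun a b : {t : RTree // t.IsHierarchy ∧ t.leaves = n} => RTree.Iso a.1 b.1)

/-- `t` contains no subhierarchy isomorphic to `S`. -/
def RTree.Avoids (t S : RTree) : Prop :=
  ∀ s : RTree, s.SubtreeOf t → ¬ RTree.Iso s S

/-- The number of isomorphism classes of hierarchies of size `n` containing
no subhierarchy isomorphic to `S`. -/
noncomputable def avoidCount (S : RTree) (n : ℕ) : ℕ :=
  Nat.card (Quot fun a b : {t : RTree // t.IsHierarchy ∧ t.leaves = n ∧ t.Avoids S} =>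
    RTree.Iso a.1 b.1)

/-! Let `H(x) = ∑ x ^ size` over all hierarchies, with radius of convergence `ρ`. A hierarchy is
determined by the multiset of its children, which may be any multiset that does not have exactly one
element, so `exp (H(x) + Φ(x)) = 2 * H(x) + 1 - x` with `Φ(x) = ∑ k ≥ 2, H(x ^ k) / k`. Then
`exp H ≤ 1 + 2 * H` and `H ≤ 2` below `ρ`; hence `ρ < 1`, the sum `H(ρ)` is finite, and `Φ` is
continuous at `ρ`, because it only involves `H` near `ρ ^ 2 < ρ`.

For a class `D` that is closed under taking subhierarchies and misses a hierarchy `q₀`, the same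
recursion holds as an inequality in which the constant `1 - x` can be improved to
`1 - x + x ^ size q₀`. By continuity `H(ρ)` remains a supersolution of this inequality at some
`z > ρ`, where it bounds the partial sums of the generating function of `D`. So the number of
members of `D` of size `n` is `O(z ^ (-n))`, whereas joining hierarchies shows that their total
number is supermultiplicative up to a factor `2`, and thus at least `2 * r ^ (-n)` for every `r > ρ`
and large `n`. -/

open Filter Finset Topology

/-! ### Weighted sums over multisets -/

theorem hasSum_fin_pi_prod {κ : Type*} {n : ℕ} {f : Fin n → κ → ℝ} {a : Fin n → ℝ}
    (hf₀ : ∀ i k, 0 ≤ f i k) (hf : ∀ i, HasSum (f i) (a i)) :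
    HasSum (fun k : Fin n → κ => ∏ i, f i (k i)) (∏ i, a i) := by
  induction n with
  | zero => simp
  | succ n ih =>
    have htail := ih (fun i => hf₀ i.succ) fun i => hf i.succ
    have htail₀ : 0 ≤ fun k : Fin n → κ => ∏ i, f i.succ (k i) := fun k =>
      prod_nonneg fun i _ => hf₀ _ _
    have hsummable := (hf 0).summable.mul_of_nonneg htail.summable (hf₀ 0) htail₀
    have hprod := (hf 0).mul htail hsummable
    rw [← (Fin.consEquiv fun _ => κ).hasSum_iff]
    simpa [Function.comp_def, Fin.prod_univ_succ] using hprod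

theorem hasSum_pi_prod {ι κ : Type*} [Fintype ι] {f : ι → κ → ℝ} {a : ι → ℝ}
    (hf₀ : ∀ i k, 0 ≤ f i k) (hf : ∀ i, HasSum (f i) (a i)) :
    HasSum (fun k : ι → κ => ∏ i, f i (k i)) (∏ i, a i) := by
  have e := Fintype.equivFin ι
  rw [← e.symm.prod_comp, ← (e.symm.arrowCongr (Equiv.refl κ)).hasSum_iff]
  convert hasSum_fin_pi_prod (fun i => hf₀ (e.symm i)) fun i => hf (e.symm i) using 2 with k
  simp [← e.symm.prod_comp]

theorem hasSum_multiset_prod {ι : Type*} [Fintype ι] {w : ι → ℝ} (hw₀ : ∀ i, 0 ≤ w i)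
    (hw₁ : ∀ i, w i < 1) :
    HasSum (fun M : Multiset ι => (M.map w).prod) (∏ i, (1 - w i)⁻¹) := by
  classical
  have hpi := hasSum_pi_prod (fun i k => pow_nonneg (hw₀ i) k)
    fun i => hasSum_geometric_of_lt_one (hw₀ i) (hw₁ i)
  rw [← (Multiset.toFinsupp.toEquiv.trans Finsupp.equivFunOnFinite).hasSum_iff] at hpi
  convert hpi using 2 with M
  rw [prod_multiset_map_count]
  exact prod_subset (subset_univ _) fun i _ hi => by simp_all

theorem hasSum_multiset_prod_of_card_ne_one {ι : Type*} [Fintype ι] {w : ι → ℝ}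
    (hw₀ : ∀ i, 0 ≤ w i) (hw₁ : ∀ i, w i < 1) :
    HasSum (fun M : {M : Multiset ι // M.card ≠ 1} => (M.1.map w).prod)
      (∏ i, (1 - w i)⁻¹ - ∑ i, w i) := by
  have hinj : Function.Injective (singleton : ι → Multiset ι) := fun _ _ => Multiset.singleton_inj.1
  have hsingle : HasSum (fun M : Set.range (singleton : ι → Multiset ι) => (M.1.map w).prod)
      (∑ i, w i) := by
    rw [hinj.hasSum_range_iff (f := fun M => (M.map w).prod)]
    simpa [Function.comp_def] using hasSum_fintype w
  have hcompl := hsingle.hasSum_iff_compl.1 (hasSum_multiset_prod hw₀ hw₁)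
  have hrange : {M : Multiset ι | M.card ≠ 1} = (Set.range singleton)ᶜ := by
    ext M
    simp [Multiset.card_eq_one, eq_comm]
  rw [← hrange] at hcompl
  exact hcompl

/-! ### Inequalities for real sequences -/

/-- The sum `∑ k ≥ 2, u ^ k / k`, that is, the power series of `log (1 - u)⁻¹` without its linear
term. -/
noncomputable def logTail (u : ℝ) : ℝ := -Real.log (1 - u) - u

theorem logTail_nonneg {u : ℝ} (hu : u < 1) : 0 ≤ logTail u := by
  have := Real.log_le_sub_one_of_pos (sub_pos.2 hu)
  rw [logTail]
  linarith

theorem logTail_le {u : ℝ} (hu : u < 1) : logTail u ≤ u ^ 2 / (1 - u) := by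
  have hlog := Real.one_sub_inv_le_log_of_pos (sub_pos.2 hu)
  have hsub : (1 - u)⁻¹ - 1 - u = u ^ 2 / (1 - u) := by
    have := (sub_pos.2 hu).ne'
    field_simp
    ring
  rw [logTail]
  linarith

theorem exp_add_logTail {u : ℝ} (hu : u < 1) : Real.exp (u + logTail u) = (1 - u)⁻¹ := by
  rw [logTail, add_sub_cancel, Real.exp_neg, Real.exp_log (sub_pos.2 hu)]

theorem continuousOn_logTail : ContinuousOn logTail (Set.Iio 1) := by
  have hlog : ContinuousOn (fun u : ℝ => Real.log (1 - u)) (Set.Iio 1) :=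
    (continuousOn_const.sub continuousOn_id).log fun u hu => (sub_pos.2 hu).ne'
  exact hlog.neg.sub continuousOn_id

theorem subadditive_neg_log {c : ℕ → ℝ} (hc₀ : 0 ≤ c 0) (hc : ∀ n ≠ 0, 0 < c n)
    (hmul : ∀ i j, c i * c j ≤ c (i + j)) : Subadditive fun n => -Real.log (c n) := by
  have hlog₀ : Real.log (c 0) ≤ 0 :=
    Real.log_nonpos hc₀ (le_of_mul_le_mul_right (by simpa using hmul 0 1) (hc 1 one_ne_zero))
  intro i j
  rcases eq_or_ne i 0 with rfl | hi
  · simpa using hlog₀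
  rcases eq_or_ne j 0 with rfl | hj
  · simpa using hlog₀
  have hlog := Real.log_le_log (mul_pos (hc i hi) (hc j hj)) (hmul i j)
  rw [Real.log_mul (hc i hi).ne' (hc j hj).ne'] at hlog
  linarith

/-- Fekete's lemma for `-log c`: the limit of `-log (c n) / n` is `log ρ`. -/
theorem exists_pos_mul_pow_le_one {c : ℕ → ℝ} {K : ℝ} (hc₀ : 0 ≤ c 0) (hc : ∀ n ≠ 0, 0 < c n)
    (hmul : ∀ i j, c i * c j ≤ c (i + j)) (hK : ∀ n ≠ 0, c n ≤ K ^ n) :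
    ∃ ρ > 0, (∀ n ≠ 0, c n * ρ ^ n ≤ 1) ∧ ∀ r > ρ, ∀ᶠ n in atTop, 1 ≤ c n * r ^ n := by
  have hsub := subadditive_neg_log hc₀ hc hmul
  have hbdd : BddBelow (Set.range fun n => -Real.log (c n) / n) := by
    refine ⟨-|Real.log K|, ?_⟩
    rintro _ ⟨n, rfl⟩
    rcases eq_or_ne n 0 with rfl | hn
    · simp
    · have hlog := Real.log_le_log (hc n hn) (hK n hn)
      rw [Real.log_pow] at hlog
      rw [le_div_iff₀ (by positivity)]
      nlinarith [le_abs_self (Real.log K), (n.cast_nonneg : (0 : ℝ) ≤ n)]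
  refine ⟨Real.exp hsub.lim, Real.exp_pos _, fun n hn => ?_, fun r hr => ?_⟩
  · have hlim := hsub.lim_le_div hbdd hn
    rw [le_div_iff₀ (by positivity)] at hlim
    rw [← Real.exp_log (hc n hn), ← Real.exp_nat_mul, ← Real.exp_add, Real.exp_le_one_iff]
    linarith
  · have hr₀ : 0 < r := (Real.exp_pos _).trans hr
    filter_upwards [(hsub.tendsto_lim hbdd).eventually_lt_const ((Real.lt_log_iff_exp_lt hr₀).2 hr),
      eventually_ne_atTop 0] with n hlt hn
    rw [div_lt_iff₀ (by positivity)] at hlt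
    rw [← Real.exp_log (hc n hn), ← Real.exp_log hr₀, ← Real.exp_nat_mul, ← Real.exp_add,
      Real.one_le_exp_iff]
    linarith

theorem le_of_supersolution {t γ : ℕ → ℝ} {y Γ c : ℝ}
    (hstep : ∀ N, t (N + 1) + t N + c ≤ Real.exp (t N + γ N)) (ht : ∀ N, 0 ≤ t N + Γ)
    (hγ : ∀ N, t N ≤ y → γ N ≤ Γ) (hy : Real.exp (y + Γ) ≤ 2 * y + c) (h0 : t 0 ≤ y) (N : ℕ) :
    t N ≤ y := by
  induction N with
  | zero => exact h0
  | succ N ih =>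
    have hexp : Real.exp (t N + Γ) - t N ≤ Real.exp (y + Γ) - y := by
      have hdiff : y - t N ≤ Real.exp (y - t N) - 1 := by
        linarith [Real.add_one_le_exp (y - t N)]
      have hone : 1 ≤ Real.exp (t N + Γ) := Real.one_le_exp (ht N)
      have hsplit : Real.exp (y + Γ) = Real.exp (t N + Γ) * Real.exp (y - t N) := by
        rw [← Real.exp_add]
        congr 1
        ring
      nlinarith
    have := hstep N
    have := Real.exp_le_exp.2 (add_le_add_right (hγ N ih) (t N))
    linarith

/-! ### Unordered trees -/

namespace RTree

theorem leaves_node {l : List RTree} (hl : l ≠ []) :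
    (node l).leaves = (l.map leaves).sum := by
  obtain ⟨a, l, rfl⟩ := List.exists_cons_of_ne_nil hl
  rw [leaves, List.attach_map_val (f := leaves)]

theorem leaves_pos (t : RTree) : 0 < t.leaves :=
  t.rec (motive_1 := fun t => 0 < t.leaves) (motive_2 := fun l => ∀ t ∈ l, 0 < t.leaves)
    (fun l ih => by
      rcases eq_or_ne l [] with rfl | hl
      · simp [leaves]
      · rw [leaves_node hl]
        exact List.sum_pos _ (List.forall_mem_map.2 ih) (by simpa))
    (by simp) (fun _ _ ht hl => List.forall_mem_cons.2 ⟨ht, hl⟩)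

theorem Iso.refl (t : RTree) : Iso t t :=
  t.rec (motive_1 := fun t => Iso t t) (motive_2 := fun l => List.Forall₂ Iso l l)
    (fun l ih => .node ih (.refl l)) .nil (fun _ _ => .cons)

theorem Iso.symm {s t : RTree} (h : Iso s t) : Iso t s :=
  h.rec (motive_1 := fun s t _ => Iso t s) (motive_2 := fun l l' _ => List.Forall₂ Iso l' l)
    (fun _ h₂ ih =>
      have ⟨_, h, h'⟩ := List.perm_comp_forall₂ h₂.symm ih
      .node h h')
    .nil (fun _ _ => .cons)

theorem Iso.trans {s t r : RTree} (h : Iso s t) : Iso t r → Iso s r :=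
  h.rec (motive_1 := fun s t _ => ∀ r, Iso t r → Iso s r)
    (motive_2 := fun l l' _ => ∀ k, List.Forall₂ Iso l' k → List.Forall₂ Iso l k)
    (fun _ h₂ ih _ h => by
      obtain ⟨h₃, h₄⟩ := h
      obtain ⟨k, h₅, h₆⟩ := List.perm_comp_forall₂ h₂ h₃
      exact .node (ih k h₅) (h₆.trans h₄))
    (fun _ => id)
    (fun _ _ ih ih' _ h => by
      cases h with
      | cons h h' => exact .cons (ih _ h) (ih' _ h'))
    r

theorem Iso.leaves_eq {s t : RTree} (h : Iso s t) : s.leaves = t.leaves :=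
  h.rec (motive_1 := fun s t _ => s.leaves = t.leaves)
    (motive_2 := fun l l' _ => l.map leaves = l'.map leaves)
    (fun {l₁ l l₂} h₁ h₂ ih => by
      rcases eq_or_ne l₁ [] with rfl | hl
      · obtain rfl := List.forall₂_nil_left_iff.1 h₁
        obtain rfl := h₂.nil_eq
        rfl
      · have hl₂ : l₂ ≠ [] := by
          rwa [← List.length_pos_iff, ← h₂.length_eq, ← h₁.length_eq, List.length_pos_iff]
        rw [leaves_node hl, leaves_node hl₂, ih, (h₂.map leaves).sum_eq])
    rfl (fun _ _ h h' => congrArg₂ List.cons h h')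

instance setoid : Setoid RTree where
  r := Iso
  iseqv := ⟨Iso.refl, Iso.symm, Iso.trans⟩

end RTree

/-- Finite rooted unordered trees, i.e. isomorphism classes of `RTree`. -/
abbrev UTree : Type := Quotient RTree.setoid

namespace UTree

/-- The isomorphism class of a tree. -/
abbrev mk : RTree → UTree := Quotient.mk _

theorem mk_eq_mk {s t : RTree} : mk s = mk t ↔ RTree.Iso s t := Quotient.eq

theorem mk_node_eq_mk_node {l₁ l₂ : List RTree} :
    mk (.node l₁) = mk (.node l₂) ↔ (l₁.map mk).Perm (l₂.map mk) := by
  have hperm : (∃ l : List RTree, l₁.map mk = l.map mk ∧ l.Perm l₂) ↔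
      (l₁.map mk).Perm (l₂.map mk) :=
    Iff.of_eq (congrFun₂ (List.eq_map_comp_perm mk) (l₁.map mk) l₂)
  simp only [← List.forall₂_eq_eq_eq, List.forall₂_map_left_iff, List.forall₂_map_right_iff,
    mk_eq_mk] at hperm ⊢
  exact ⟨fun ⟨h₁, h₂⟩ => hperm.1 ⟨_, h₁, h₂⟩, fun h =>
    have ⟨_, h₁, h₂⟩ := hperm.2 h
    .node h₁ h₂⟩

/-- The multiset of the isomorphism classes of the subtrees at the children of the root. -/
def children : UTree → Multiset UTree :=
  Quotient.lift (fun | .node l => (l.map mk : List UTree)) fun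
    | .node _, .node _, h =>
      Multiset.coe_eq_coe.2 (mk_node_eq_mk_node.1 (Quotient.sound h))

theorem children_mk_node (l : List RTree) : children (mk (.node l)) = (l.map mk : List UTree) :=
  rfl

theorem children_injective : Function.Injective children := by
  rintro ⟨⟨l₁⟩⟩ ⟨⟨l₂⟩⟩ h
  exact mk_node_eq_mk_node.2 (Multiset.coe_eq_coe.1 h)

/-- The number of leaves. -/
def size : UTree → ℕ := Quotient.lift RTree.leaves fun _ _ => RTree.Iso.leaves_eq

theorem size_pos (q : UTree) : 0 < q.size :=
  q.inductionOn RTree.leaves_pos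

theorem size_eq_sum {q : UTree} (h : q.children ≠ 0) : q.size = (q.children.map size).sum := by
  obtain ⟨⟨l⟩⟩ := q
  have hl : l ≠ [] := by
    rintro rfl
    exact h rfl
  change (RTree.node l).leaves = (Multiset.map size (l.map mk : List UTree)).sum
  rw [RTree.leaves_node hl, Multiset.map_coe, Multiset.sum_coe, List.map_map]
  rfl

/-- The isomorphism classes of hierarchies. -/
def hierarchies : Set UTree := mk '' {t | t.IsHierarchy}

theorem mem_hierarchies_of_mem_children {q c : UTree} (hq : q ∈ hierarchies)
    (hc : c ∈ q.children) : c ∈ hierarchies := by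
  obtain ⟨_, ⟨-, hl⟩, rfl⟩ := hq
  obtain ⟨t, ht, rfl⟩ := List.mem_map.1 (Multiset.mem_coe.1 hc)
  exact ⟨t, hl t ht, rfl⟩

theorem card_children_ne_one {q : UTree} (hq : q ∈ hierarchies) : q.children.card ≠ 1 := by
  obtain ⟨_, ⟨hl, -⟩, rfl⟩ := hq
  simpa [children_mk_node] using hl

theorem exists_mem_hierarchies_children_eq {M : Multiset UTree} (hcard : M.card ≠ 1)
    (hM : ∀ c ∈ M, c ∈ hierarchies) : ∃ q ∈ hierarchies, q.children = M := by
  obtain ⟨l, rfl⟩ := Quot.exists_rep M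
  have hl : l ∈ Set.range (List.map fun t : {t : RTree // t.IsHierarchy} => mk t) := by
    rw [Set.range_list_map]
    intro c hc
    obtain ⟨t, ht, rfl⟩ := hM c hc
    exact ⟨⟨t, ht⟩, rfl⟩
  obtain ⟨l, rfl⟩ := hl
  refine ⟨_, ⟨.node (l.map (↑)), .node (by simpa using hcard) ?_, rfl⟩, ?_⟩
  · exact List.forall_mem_map.2 fun t _ => t.2
  · rw [children_mk_node, List.map_map]
    rfl

end UTree

theorem RTree.SubtreeOf.exists_iso {s t t' : RTree} (hs : s.SubtreeOf t) (h : t.Iso t') :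
    ∃ s', s'.SubtreeOf t' ∧ s.Iso s' := by
  induction hs generalizing t' with
  | refl => exact ⟨t', .refl t', h⟩
  | @child c l hc _ ih =>
    obtain ⟨l'⟩ := t'
    have hc' := (UTree.mk_node_eq_mk_node.1 (Quotient.sound h)).subset (List.mem_map_of_mem hc)
    obtain ⟨c', hc', hcc'⟩ := List.mem_map.1 hc'
    obtain ⟨s', hs', hss'⟩ := ih (UTree.mk_eq_mk.1 hcc'.symm)
    exact ⟨s', .child hc' hs', hss'⟩

/-- Isomorphism classes of hierarchies. -/
abbrev Hierarchy : Type := UTree.hierarchies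

namespace Hierarchy

/-- The multiset of the maximal proper subhierarchies. -/
noncomputable def children (q : Hierarchy) : Multiset Hierarchy :=
  q.1.children.pmap Subtype.mk fun _ => UTree.mem_hierarchies_of_mem_children q.2

theorem map_val_children (q : Hierarchy) : q.children.map Subtype.val = q.1.children := by
  rw [children, Multiset.map_pmap, Multiset.pmap_eq_map, Multiset.map_id']

theorem children_injective : Function.Injective children := fun p q h =>
  Subtype.ext (UTree.children_injective (by rw [← map_val_children, h, map_val_children]))

theorem range_children : Set.range children = {M | M.card ≠ 1} := by
  ext M
  constructor
  · rintro ⟨q, rfl⟩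
    simpa [← map_val_children] using UTree.card_children_ne_one q.2
  · intro hM
    obtain ⟨q, hq, hqM⟩ := UTree.exists_mem_hierarchies_children_eq (M := M.map Subtype.val)
      (by simpa using hM) (by simp +contextual)
    refine ⟨⟨q, hq⟩, Multiset.map_injective Subtype.val_injective ?_⟩
    rw [map_val_children, hqM]

/-- The number of leaves. -/
abbrev size (q : Hierarchy) : ℕ := q.1.size

theorem size_eq_sum {q : Hierarchy} (h : q.children ≠ 0) :
    q.size = (q.children.map size).sum := by
  have h' : q.1.children ≠ 0 := by
    rwa [← map_val_children, Ne, Multiset.map_eq_zero]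
  rw [size, UTree.size_eq_sum h', ← map_val_children, Multiset.map_map]
  rfl

theorem size_lt_of_mem_children {c q : Hierarchy} (h : c ∈ q.children) : c.size < q.size := by
  obtain ⟨M, hM⟩ := Multiset.exists_cons_of_mem h
  have hM0 : M ≠ 0 := by
    rintro rfl
    exact range_children.subset ⟨q, rfl⟩ (by simp [hM])
  obtain ⟨d, hd⟩ := Multiset.exists_mem_of_ne_zero hM0
  have hsum := size_eq_sum (q := q) (by simp [hM])
  rw [hM, Multiset.map_cons, Multiset.sum_cons] at hsum
  have hdM := Multiset.le_sum_of_mem (Multiset.mem_map_of_mem size hd)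
  have hd0 : 0 < d.size := d.1.size_pos
  omega

theorem card_children_le_size (q : Hierarchy) : q.children.card ≤ q.size := by
  rcases eq_or_ne q.children 0 with h | h
  · simp [h]
  · rw [size_eq_sum h]
    have hone : ∀ n ∈ q.children.map size, 1 ≤ n := Multiset.forall_mem_map_iff.2 fun c _ =>
      c.1.size_pos
    simpa using Multiset.card_nsmul_le_sum hone

theorem finite_setOf_size_le (N : ℕ) : {q : Hierarchy | q.size ≤ N}.Finite := by
  classical
  induction N with
  | zero => exact Set.finite_empty.subset fun q hq => (q.1.size_pos.not_ge hq).elim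
  | succ N ih =>
    refine ((Set.finite_Iic ((N + 1) • ih.toFinset.1)).preimage
      children_injective.injOn).subset fun q hq => ?_
    refine Multiset.le_iff_count.2 fun c => ?_
    by_cases hc : c ∈ q.children
    · have hcN : c ∈ ih.toFinset := by
        simpa using Nat.le_of_lt_succ ((size_lt_of_mem_children hc).trans_le hq)
      calc q.children.count c ≤ q.children.card := Multiset.count_le_card _ _
        _ ≤ N + 1 := q.card_children_le_size.trans hq
        _ = ((N + 1) • ih.toFinset.1).count c := by
          rw [Multiset.count_nsmul, Multiset.count_eq_one_of_mem ih.toFinset.nodup hcN, mul_one]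
    · simp [Multiset.count_eq_zero_of_notMem hc]

theorem exists_children_eq {M : Multiset Hierarchy} (hM : M.card ≠ 1) :
    ∃ q : Hierarchy, q.children = M :=
  range_children.superset hM

theorem exists_children_eq_zero : ∃ q : Hierarchy, q.children = 0 := exists_children_eq (by simp)

theorem size_eq_one {q : Hierarchy} (h : q.children = 0) : q.size = 1 := by
  have hq : q.1 = UTree.mk (.node []) :=
    UTree.children_injective (by rw [← map_val_children, h]; rfl)
  rw [size, hq]
  simp [UTree.size, RTree.leaves]

theorem exists_size_eq {n : ℕ} (hn : n ≠ 0) : ∃ q : Hierarchy, q.size = n := by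
  obtain ⟨leaf, hleaf⟩ := exists_children_eq_zero
  rcases eq_or_ne n 1 with rfl | hn1
  · exact ⟨leaf, size_eq_one hleaf⟩
  · obtain ⟨q, hq⟩ := exists_children_eq (M := .replicate n leaf) (by simpa)
    refine ⟨q, ?_⟩
    rw [size_eq_sum, hq, Multiset.map_replicate, Multiset.sum_replicate, size_eq_one hleaf,
      smul_eq_mul, mul_one]
    simpa [hq] using (by simpa [← Multiset.card_eq_zero])

/-- The hierarchies of size at most `N`. -/
noncomputable def upto (N : ℕ) : Finset Hierarchy := (finite_setOf_size_le N).toFinset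

@[simp]
theorem mem_upto {N : ℕ} {q : Hierarchy} : q ∈ upto N ↔ q.size ≤ N := by simp [upto]

/-- The hierarchies of size `n`. -/
noncomputable def ofSize (n : ℕ) : Finset Hierarchy := {q ∈ upto n | q.size = n}

@[simp]
theorem mem_ofSize {n : ℕ} {q : Hierarchy} : q ∈ ofSize n ↔ q.size = n := by
  simpa [ofSize] using le_of_eq

theorem card_ofSize_pos {n : ℕ} (hn : n ≠ 0) : 0 < #(ofSize n) :=
  have ⟨q, hq⟩ := exists_size_eq hn
  card_pos.2 ⟨q, mem_ofSize.2 hq⟩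

/-- The join of `p` and `q` has exactly two children `p` and `q`, so `p` and `q` are determined by
it up to order. -/
theorem card_ofSize_mul_card_ofSize_le (a b : ℕ) :
    #(ofSize a) * #(ofSize b) ≤ 2 * #(ofSize (a + b)) := by
  classical
  choose join hjoin using fun pq : Hierarchy × Hierarchy =>
    exists_children_eq (M := {pq.1, pq.2}) (by simp)
  have hsize (pq) : (join pq).size = pq.1.size + pq.2.size := by
    rw [size_eq_sum] <;> simp [hjoin]
  rw [← card_product]
  refine card_le_mul_card_image_of_maps_to (f := join) (fun pq hpq => ?_) 2 fun q _ => ?_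
  · rw [mem_product, mem_ofSize, mem_ofSize] at hpq
    rw [mem_ofSize, hsize, hpq.1, hpq.2]
  · rcases ({pq ∈ ofSize a ×ˢ ofSize b | join pq = q} : Finset _).eq_empty_or_nonempty
      with hempty | ⟨pq, hpq⟩
    · simp [hempty]
    · refine (card_le_card fun rs hrs => ?_).trans (card_le_two (a := pq) (b := pq.swap))
      have hpair : ({rs.1, rs.2} : Multiset Hierarchy) = {pq.1, pq.2} := by
        rw [← hjoin, ← hjoin, (mem_filter.1 hrs).2, (mem_filter.1 hpq).2]
      simp only [Multiset.insert_eq_cons, Multiset.cons_eq_cons, Multiset.singleton_inj,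
        Multiset.singleton_eq_cons_iff] at hpair
      simp only [mem_insert, mem_singleton, Prod.ext_iff, Prod.fst_swap, Prod.snd_swap]
      tauto

/-- The isomorphism class of a tree that is a hierarchy. -/
def ofTree (t : RTree) (ht : t.IsHierarchy) : Hierarchy := ⟨UTree.mk t, t, ht, rfl⟩

theorem ofTree_eq_ofTree {s t : RTree} (hs : s.IsHierarchy) (ht : t.IsHierarchy) :
    ofTree s hs = ofTree t ht ↔ s.Iso t :=
  Subtype.ext_iff.trans UTree.mk_eq_mk

theorem card_quot_iso_eq_card {P : RTree → Prop} {F : Finset Hierarchy}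
    (hF : ∀ t (ht : t.IsHierarchy), ofTree t ht ∈ F ↔ P t) :
    Nat.card (Quot fun a b : {t : RTree // t.IsHierarchy ∧ P t} => RTree.Iso a.1 b.1) = #F := by
  let cls : Quot (fun a b : {t : RTree // t.IsHierarchy ∧ P t} => RTree.Iso a.1 b.1) → F :=
    Quot.lift (fun t => ⟨ofTree t.1 t.2.1, (hF t.1 t.2.1).2 t.2.2⟩)
      fun s t h => Subtype.ext ((ofTree_eq_ofTree s.2.1 t.2.1).2 h)
  have hcls : Function.Bijective cls := by
    constructor
    · rintro ⟨s⟩ ⟨t⟩ h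
      exact Quot.sound ((ofTree_eq_ofTree s.2.1 t.2.1).1 (Subtype.ext_iff.1 h))
    · rintro ⟨⟨_, t, ht, rfl⟩, h⟩
      exact ⟨Quot.mk _ ⟨t, ht, (hF t ht).1 h⟩, rfl⟩
  rw [Nat.card_eq_of_bijective cls hcls, Nat.card_eq_fintype_card, Fintype.card_coe]

theorem hierarchyCount_eq (n : ℕ) : hierarchyCount n = #(ofSize n) :=
  card_quot_iso_eq_card fun _ _ => mem_ofSize

/-- The hierarchies that have no subhierarchy isomorphic to `S`. -/
def avoiders (S : RTree) : Set Hierarchy := {q | ∃ t, UTree.mk t = q.1 ∧ t.Avoids S}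

theorem ofTree_mem_avoiders {S t : RTree} {ht : t.IsHierarchy} :
    ofTree t ht ∈ avoiders S ↔ t.Avoids S := by
  refine ⟨fun ⟨t', ht', h⟩ s hs hsS => ?_, fun h => ⟨t, rfl, h⟩⟩
  obtain ⟨s', hs', hss'⟩ := hs.exists_iso (UTree.mk_eq_mk.1 ht'.symm)
  exact h s' hs' (hss'.symm.trans hsS)

theorem avoidCount_eq (S : RTree) [DecidablePred (· ∈ avoiders S)] (n : ℕ) :
    avoidCount S n = #{q ∈ ofSize n | q ∈ avoiders S} :=
  card_quot_iso_eq_card fun _ _ => by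
    rw [mem_filter, mem_ofSize, ofTree_mem_avoiders]
    rfl

theorem ofTree_notMem_avoiders (S : RTree) (hS : S.IsHierarchy) : ofTree S hS ∉ avoiders S :=
  fun h => ofTree_mem_avoiders.1 h S (.refl S) (.refl S)

/-! ### The generating function of hierarchies -/

variable {x : ℝ}

theorem pow_size_eq_prod {q : Hierarchy} (h : q.children ≠ 0) :
    x ^ q.size = (q.children.map fun c => x ^ c.size).prod := by
  rw [size_eq_sum h]
  induction q.children using Multiset.induction with
  | empty => simp
  | cons c M ih => simp [pow_add, ih]

/-- The product counts the multisets of elements of `F`. Those with one element are not of the form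
`q.children`, and the empty one has weight `1` instead of `x`. -/
theorem hasSum_pow_size_of_children_subset {F : Finset Hierarchy} (hx₀ : 0 ≤ x) (hx₁ : x < 1) :
    HasSum (fun q : {q : Hierarchy // ∀ c ∈ q.children, c ∈ F} => x ^ q.1.size)
      (∏ q ∈ F, (1 - x ^ q.size)⁻¹ - ∑ q ∈ F, x ^ q.size - 1 + x) := by
  classical
  have hw := hasSum_multiset_prod_of_card_ne_one (fun q : F => pow_nonneg hx₀ q.1.size)
    fun q => pow_lt_one₀ hx₀ hx₁ q.1.1.size_pos.ne'
  choose φ hφ using fun q : {q : Hierarchy // ∀ c ∈ q.children, c ∈ F} =>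
    (CanLift.prf q.1.children q.2 : ∃ M : Multiset F, M.map (↑) = q.1.children)
  have hcard (q) : (φ q).card ≠ 1 := by
    rw [← Multiset.card_map, hφ]
    exact range_children.subset ⟨q.1, rfl⟩
  have hbij : Function.Bijective fun q => (⟨φ q, hcard q⟩ : {M : Multiset F // M.card ≠ 1}) := by
    refine ⟨fun p q hpq => Subtype.ext (children_injective ?_), fun M => ?_⟩
    · rw [← hφ, ← hφ]
      exact congrArg _ (Subtype.ext_iff.1 hpq)
    · obtain ⟨q, hq⟩ := exists_children_eq (M := M.1.map (↑)) (by simpa using M.2)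
      refine ⟨⟨q, by simp +contextual [hq]⟩, Subtype.ext ?_⟩
      exact Multiset.map_injective Subtype.val_injective ((hφ _).trans hq)
  have h0 : (0 : Multiset F).card ≠ 1 := by simp
  have hterm (q) : x ^ q.1.size = Function.update
      (fun M : {M : Multiset F // M.card ≠ 1} => (M.1.map fun c => x ^ c.1.size).prod)
      ⟨0, h0⟩ x ⟨φ q, hcard q⟩ := by
    have hφ0 : φ q = 0 ↔ q.1.children = 0 := by rw [← hφ, Multiset.map_eq_zero]
    by_cases hq : q.1.children = 0
    · simp [hφ0.2 hq, size_eq_one hq]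
    · simp [mt hφ0.1 hq, pow_size_eq_prod hq, ← hφ]
  have hupdate := (Equiv.ofBijective _ hbij).hasSum_iff.2 (hw.update ⟨0, h0⟩ x)
  rw [Multiset.map_zero, Multiset.prod_zero, prod_coe_sort F fun q => (1 - x ^ q.size)⁻¹,
    sum_coe_sort F fun q => x ^ q.size, sub_add_eq_add_sub, add_comm,
    ← sub_add_eq_add_sub] at hupdate
  rw [funext hterm]
  exact hupdate

theorem sum_add_sum_le_prod {F B : Finset Hierarchy} (hx₀ : 0 ≤ x) (hx₁ : x < 1)
    (hB : ∀ q ∈ B, ∀ c ∈ q.children, c ∈ F) :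
    ∑ q ∈ B, x ^ q.size + ∑ q ∈ F, x ^ q.size + (1 - x) ≤ ∏ q ∈ F, (1 - x ^ q.size)⁻¹ := by
  classical
  have h := sum_le_hasSum (B.subtype fun q => ∀ c ∈ q.children, c ∈ F)
    (fun _ _ => pow_nonneg hx₀ _) (hasSum_pow_size_of_children_subset hx₀ hx₁)
  rw [sum_subtype_of_mem (fun q => x ^ q.size) hB] at h
  linarith

theorem prod_inv_one_sub_pow_size_le {F : Finset Hierarchy} (hx₀ : 0 ≤ x) (hx₁ : x < 1)
    (hsum : Summable fun q : Hierarchy => x ^ q.size) :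
    ∏ q ∈ F, (1 - x ^ q.size)⁻¹ ≤ 2 * ∑' q : Hierarchy, x ^ q.size + (1 - x) := by
  have hF := hsum.sum_le_tsum F fun q _ => pow_nonneg hx₀ _
  have hchildren := (hasSum_pow_size_of_children_subset (F := F) hx₀ hx₁).tsum_eq ▸
    hsum.tsum_subtype_le _ {q : Hierarchy | ∀ c ∈ q.children, c ∈ F} fun q => pow_nonneg hx₀ _
  linarith

theorem pow_size_le (hx₀ : 0 ≤ x) (hx₁ : x ≤ 1) (q : Hierarchy) : x ^ q.size ≤ x :=
  pow_le_of_le_one hx₀ hx₁ q.1.size_pos.ne'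

theorem prod_inv_one_sub_pow_size {F : Finset Hierarchy} (hx₀ : 0 ≤ x) (hx₁ : x < 1) :
    ∏ q ∈ F, (1 - x ^ q.size)⁻¹ =
      Real.exp (∑ q ∈ F, x ^ q.size + ∑ q ∈ F, logTail (x ^ q.size)) := by
  rw [← sum_add_distrib, Real.exp_sum]
  exact prod_congr rfl fun q _ =>
    (exp_add_logTail ((pow_size_le hx₀ hx₁.le q).trans_lt hx₁)).symm

theorem logTail_pow_size_nonneg (hx₀ : 0 ≤ x) (hx₁ : x < 1) (q : Hierarchy) :
    0 ≤ logTail (x ^ q.size) :=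
  logTail_nonneg ((pow_size_le hx₀ hx₁.le q).trans_lt hx₁)

theorem logTail_pow_size_le (hx₀ : 0 ≤ x) (hx₁ : x < 1) (q : Hierarchy) :
    logTail (x ^ q.size) ≤ (x ^ 2) ^ q.size / (1 - x) := by
  have hle := pow_size_le hx₀ hx₁.le q
  calc logTail (x ^ q.size) ≤ (x ^ q.size) ^ 2 / (1 - x ^ q.size) := logTail_le (hle.trans_lt hx₁)
    _ ≤ (x ^ q.size) ^ 2 / (1 - x) := by
      have := sub_pos.2 hx₁
      gcongr
    _ = (x ^ 2) ^ q.size / (1 - x) := by rw [pow_right_comm]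

theorem summable_logTail_pow_size (hx₀ : 0 ≤ x) (hx₁ : x < 1)
    (hsum : Summable fun q : Hierarchy => (x ^ 2) ^ q.size) :
    Summable fun q : Hierarchy => logTail (x ^ q.size) :=
  .of_nonneg_of_le (logTail_pow_size_nonneg hx₀ hx₁) (logTail_pow_size_le hx₀ hx₁)
    (hsum.div_const _)

/-- The pair `x = 1 / 20`, `y = 1 / 10` satisfies `exp (y + y * x / (1 - x)) ≤ 2 * y + (1 - x)`. -/
theorem sum_upto_inv_twenty_pow_size_le (N : ℕ) :
    ∑ q ∈ upto N, (1 / 20 : ℝ) ^ q.size ≤ 1 / 10 := by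
  have hx₀ : (0 : ℝ) ≤ 1 / 20 := by norm_num
  have hx₁ : (1 / 20 : ℝ) < 1 := by norm_num
  have hlog (q : Hierarchy) : logTail ((1 / 20 : ℝ) ^ q.size) ≤ (1 / 20) ^ q.size / 19 := by
    have hpow := pow_size_le hx₀ hx₁.le q
    refine (logTail_le (hpow.trans_lt hx₁)).trans ?_
    rw [div_le_div_iff₀ (by linarith) (by norm_num)]
    nlinarith [pow_nonneg hx₀ q.size]
  refine le_of_supersolution (t := fun N => ∑ q ∈ upto N, (1 / 20 : ℝ) ^ q.size)
    (γ := fun N => ∑ q ∈ upto N, logTail ((1 / 20 : ℝ) ^ q.size)) (Γ := 1 / 190)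
    (c := 1 - 1 / 20) (fun N => ?_) (fun N => by positivity) (fun N hN => ?_) ?_ ?_ N
  · rw [← prod_inv_one_sub_pow_size hx₀ hx₁]
    refine sum_add_sum_le_prod hx₀ hx₁ fun q hq c hc => mem_upto.2 ?_
    exact Nat.le_of_lt_succ ((size_lt_of_mem_children hc).trans_le (mem_upto.1 hq))
  · refine (sum_le_sum fun q _ => hlog q).trans ?_
    rw [← sum_div]
    linarith
  · exact (Real.exp_bound_div_one_sub_of_interval (by norm_num) (by norm_num)).trans
      (by norm_num)
  · have hempty : upto 0 = ∅ := eq_empty_of_forall_notMem fun q hq =>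
      q.1.size_pos.not_ge (mem_upto.1 hq)
    simp [hempty]

theorem card_mul_pow_le_sum {F G : Finset Hierarchy} {n : ℕ} (hx₀ : 0 ≤ x)
    (hF : ∀ q ∈ F, q.size = n) (hFG : F ⊆ G) : #F * x ^ n ≤ ∑ q ∈ G, x ^ q.size :=
  calc #F * x ^ n = ∑ q ∈ F, x ^ q.size := by
        rw [sum_congr rfl fun q hq => by rw [hF q hq], sum_const, nsmul_eq_mul]
    _ ≤ ∑ q ∈ G, x ^ q.size := sum_le_sum_of_subset_of_nonneg hFG fun q _ _ => pow_nonneg hx₀ _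

theorem card_ofSize_le_twenty_pow (n : ℕ) : (#(ofSize n) : ℝ) ≤ 20 ^ n := by
  have hsum := (card_mul_pow_le_sum (by norm_num) (fun _ => mem_ofSize.1) (filter_subset _ _)).trans
    (sum_upto_inv_twenty_pow_size_le n)
  rw [one_div, inv_pow, ← div_eq_mul_inv, div_le_iff₀ (by positivity)] at hsum
  exact hsum.trans (mul_le_of_le_one_left (by positivity) (by norm_num))

/-- `ρ` is the radius of convergence of the generating function `∑ n, #(ofSize n) * x ^ n`. -/
theorem exists_radius :
    ∃ ρ : ℝ, 0 < ρ ∧ (∀ n, #(ofSize n) * ρ ^ n ≤ 2) ∧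
      ∀ r > ρ, ∀ᶠ n in atTop, 2 ≤ #(ofSize n) * r ^ n := by
  have hmul (i j : ℕ) : (#(ofSize i) / 2 : ℝ) * (#(ofSize j) / 2) ≤ #(ofSize (i + j)) / 2 := by
    have : (#(ofSize i) * #(ofSize j) : ℝ) ≤ 2 * #(ofSize (i + j)) := by
      exact_mod_cast card_ofSize_mul_card_ofSize_le i j
    linarith
  obtain ⟨ρ, hρ₀, hle, hge⟩ := exists_pos_mul_pow_le_one (c := fun n => (#(ofSize n) / 2 : ℝ))
    (by positivity) (fun n hn => by have := card_ofSize_pos hn; positivity) hmul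
    (fun n _ => (half_le_self (by positivity)).trans (card_ofSize_le_twenty_pow n))
  refine ⟨ρ, hρ₀, fun n => ?_, fun r hr => ?_⟩
  · rcases eq_or_ne n 0 with rfl | hn
    · have hempty : ofSize 0 = ∅ := eq_empty_of_forall_notMem fun q hq =>
        q.1.size_pos.ne' (mem_ofSize.1 hq)
      simp [hempty]
    · linarith [hle n hn]
  · filter_upwards [hge r hr] with n hn
    linarith

theorem summable_pow_size_of_lt {ρ C : ℝ} (hρ : ∀ n, #(ofSize n) * ρ ^ n ≤ C) (hx₀ : 0 ≤ x)
    (hx : x < ρ) : Summable fun q : Hierarchy => x ^ q.size := by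
  have hρ₀ := hx₀.trans_lt hx
  have hC : 0 ≤ C := le_trans (by positivity) (hρ 0)
  have hgeom := (summable_geometric_of_lt_one (div_nonneg hx₀ hρ₀.le)
    ((div_lt_one hρ₀).2 hx)).mul_left C
  refine summable_of_sum_le (c := ∑' n, C * (x / ρ) ^ n) (fun q => pow_nonneg hx₀ _) fun G => ?_
  have hcoeff (n : ℕ) : #{q ∈ G | q.size = n} • x ^ n ≤ C * (x / ρ) ^ n := by
    have hsub : #{q ∈ G | q.size = n} ≤ #(ofSize n) :=
      card_le_card fun q hq => mem_ofSize.2 (mem_filter.1 hq).2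
    calc #{q ∈ G | q.size = n} • x ^ n ≤ #(ofSize n) • x ^ n := by gcongr
      _ = #(ofSize n) * ρ ^ n * (x / ρ) ^ n := by
        rw [div_pow, nsmul_eq_mul]
        field_simp
      _ ≤ C * (x / ρ) ^ n := by
        gcongr
        exact hρ n
  calc ∑ q ∈ G, x ^ q.size = ∑ n ∈ G.image size, #{q ∈ G | q.size = n} • x ^ n :=
        sum_comp (fun n => x ^ n) size
    _ ≤ ∑ n ∈ G.image size, C * (x / ρ) ^ n := sum_le_sum fun n _ => hcoeff n
    _ ≤ ∑' n, C * (x / ρ) ^ n := hgeom.sum_le_tsum _ fun n _ => by positivity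

theorem exp_tsum_add_tsum_le (hx₀ : 0 ≤ x) (hx₁ : x < 1)
    (hsum : Summable fun q : Hierarchy => x ^ q.size) :
    Real.exp (∑' q : Hierarchy, x ^ q.size + ∑' q : Hierarchy, logTail (x ^ q.size)) ≤
      2 * ∑' q : Hierarchy, x ^ q.size + (1 - x) := by
  have hsum₂ : Summable fun q : Hierarchy => (x ^ 2) ^ q.size :=
    hsum.of_nonneg_of_le (fun q => by positivity) fun q => by
      gcongr
      nlinarith
  have hlog := summable_logTail_pow_size hx₀ hx₁ hsum₂
  have hpos : 0 < 2 * ∑' q : Hierarchy, x ^ q.size + (1 - x) := by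
    have : 0 ≤ ∑' q : Hierarchy, x ^ q.size := tsum_nonneg fun q => by positivity
    linarith
  rw [← Real.le_log_iff_exp_le hpos, ← hsum.tsum_add hlog]
  refine (hsum.add hlog).tsum_le_of_sum_le fun F => ?_
  rw [Real.le_log_iff_exp_le hpos, sum_add_distrib, ← prod_inv_one_sub_pow_size hx₀ hx₁]
  exact prod_inv_one_sub_pow_size_le hx₀ hx₁ hsum

theorem tsum_pow_size_le_two (hx₀ : 0 ≤ x) (hx₁ : x < 1)
    (hsum : Summable fun q : Hierarchy => x ^ q.size) : ∑' q : Hierarchy, x ^ q.size ≤ 2 := by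
  have hnonneg : 0 ≤ ∑' q : Hierarchy, x ^ q.size := tsum_nonneg fun q => by positivity
  have hlog : 0 ≤ ∑' q : Hierarchy, logTail (x ^ q.size) :=
    tsum_nonneg (logTail_pow_size_nonneg hx₀ hx₁)
  have hexp : Real.exp (∑' q : Hierarchy, x ^ q.size) ≤ 2 * ∑' q : Hierarchy, x ^ q.size + 1 :=
    calc Real.exp (∑' q : Hierarchy, x ^ q.size)
      _ ≤ Real.exp (∑' q : Hierarchy, x ^ q.size + ∑' q : Hierarchy, logTail (x ^ q.size)) := by
        gcongr
        linarith
      _ ≤ 2 * ∑' q : Hierarchy, x ^ q.size + (1 - x) := exp_tsum_add_tsum_le hx₀ hx₁ hsum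
      _ ≤ 2 * ∑' q : Hierarchy, x ^ q.size + 1 := by linarith
  by_contra! h
  nlinarith [Real.quadratic_le_exp_of_nonneg hnonneg]

theorem sum_pow_size_le_two (hx₀ : 0 < x) (hx₁ : x ≤ 1)
    (hsum : ∀ y, 0 ≤ y → y < x → Summable fun q : Hierarchy => y ^ q.size) (G : Finset Hierarchy) :
    ∑ q ∈ G, x ^ q.size ≤ 2 := by
  have hcont : Continuous fun y : ℝ => ∑ q ∈ G, y ^ q.size := by fun_prop
  refine le_of_tendsto (x := 𝓝[<] x) (hcont.tendsto x |>.mono_left nhdsWithin_le_nhds) ?_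
  filter_upwards [Ioo_mem_nhdsLT hx₀] with y hy
  have hy₁ := hsum y hy.1.le hy.2
  exact (hy₁.sum_le_tsum G fun q _ => pow_nonneg hy.1.le _).trans
    (tsum_pow_size_le_two hy.1.le (hy.2.trans_le hx₁) hy₁)

instance : Infinite Hierarchy :=
  .of_injective (fun n : ℕ => (exists_size_eq n.succ_ne_zero).choose) fun m n h => by
    have hsize (n : ℕ) := (exists_size_eq n.succ_ne_zero).choose_spec
    exact Nat.succ_injective (hsize m ▸ hsize n ▸ congrArg size h)

theorem lt_one_of_forall_summable {ρ : ℝ}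
    (hsum : ∀ x, 0 ≤ x → x < ρ → Summable fun q : Hierarchy => x ^ q.size) : ρ < 1 := by
  by_contra! hρ
  obtain ⟨G, hG⟩ := Infinite.exists_subset_card_eq Hierarchy 3
  have h := sum_pow_size_le_two one_pos le_rfl (fun y hy₀ hy => hsum y hy₀ (hy.trans_le hρ)) G
  norm_num [hG] at h

theorem continuousAt_tsum_logTail_pow_size (hx₀ : 0 < x) (hx₁ : x < 1)
    (hsum : Summable fun q : Hierarchy => x ^ q.size) :
    ContinuousAt (fun y => ∑' q : Hierarchy, logTail (y ^ q.size)) x := by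
  obtain ⟨r, hxr, hr⟩ := exists_between (Real.lt_sqrt hx₀.le |>.2 (by nlinarith : x ^ 2 < x))
  have hr₀ := hx₀.trans hxr
  have hr₁ : r < 1 := hr.trans_le (Real.sqrt_le_one.2 hx₁.le)
  have hr₂ : r ^ 2 ≤ x := (Real.lt_sqrt hr₀.le).1 hr |>.le
  have hbound : Summable fun q : Hierarchy => (r ^ 2) ^ q.size / (1 - r) :=
    (hsum.of_nonneg_of_le (fun q => by positivity) fun q => by gcongr).div_const _
  have hmem {y : ℝ} (hy : y ∈ Set.Icc 0 r) : y < 1 := hy.2.trans_lt hr₁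
  refine (continuousOn_tsum (s := Set.Icc 0 r) (fun q => ?_) hbound fun q y hy => ?_).continuousAt
    (Icc_mem_nhds hx₀ hxr)
  · exact continuousOn_logTail.comp (continuousOn_pow _) fun y hy =>
      (pow_size_le hy.1 (hmem hy).le q).trans_lt (hmem hy)
  · rw [Real.norm_of_nonneg (logTail_pow_size_nonneg hy.1 (hmem hy) q)]
    refine (logTail_pow_size_le hy.1 (hmem hy) q).trans ?_
    obtain ⟨hy₀, hyr⟩ := hy
    have : 0 < 1 - r := sub_pos.2 hr₁
    gcongr

theorem summable_pow_size_of_forall_lt {ρ : ℝ} (hρ₀ : 0 < ρ)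
    (hsum : ∀ x, 0 ≤ x → x < ρ → Summable fun q : Hierarchy => x ^ q.size) :
    Summable fun q : Hierarchy => ρ ^ q.size :=
  summable_of_sum_le (fun _ => pow_nonneg hρ₀.le _)
    (sum_pow_size_le_two hρ₀ (lt_one_of_forall_summable hsum).le hsum)

/-! ### Hereditary classes -/

/-- A class of hierarchies is hereditary if it is closed under taking subhierarchies. -/
def IsHereditary (D : Set Hierarchy) : Prop := ∀ q ∈ D, ∀ c ∈ q.children, c ∈ D

theorem isHereditary_avoiders (S : RTree) : IsHereditary (avoiders S) := by
  rintro ⟨_, hq⟩ ⟨⟨l⟩, rfl, ht⟩ c hc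
  have hcl : c.1 ∈ UTree.children (.mk (.node l)) :=
    map_val_children ⟨_, hq⟩ ▸ Multiset.mem_map_of_mem _ hc
  obtain ⟨t, htl, htc⟩ := List.mem_map.1 (Multiset.mem_coe.1 hcl)
  exact ⟨t, htc, fun s hs => ht s (.child htl hs)⟩

theorem exists_notMem_children_subset {D : Set Hierarchy} (hD : D ≠ Set.univ) :
    ∃ q ∉ D, ∀ c ∈ q.children, c ∈ D := by
  have hne : Dᶜ.Nonempty := Set.nonempty_compl.2 hD
  refine ⟨Function.argminOn size Dᶜ hne, Function.argminOn_mem size Dᶜ hne, fun c hc => ?_⟩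
  by_contra hcD
  exact (Function.argminOn_le size Dᶜ hcD).not_gt (size_lt_of_mem_children hc)

variable {D : Set Hierarchy} [DecidablePred (· ∈ D)] {q₀ : Hierarchy}

theorem IsHereditary.sum_add_sum_le_exp (hD : IsHereditary D) (hq₀ : q₀ ∉ D)
    (hchildren : ∀ c ∈ q₀.children, c ∈ D) {N : ℕ} (hN : q₀.size ≤ N) (hx₀ : 0 ≤ x) (hx₁ : x < 1) :
    ∑ q ∈ upto (N + 1) with q ∈ D, x ^ q.size + ∑ q ∈ upto N with q ∈ D, x ^ q.size +
        (1 - x + x ^ q₀.size) ≤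
      Real.exp (∑ q ∈ upto N with q ∈ D, x ^ q.size +
        ∑ q ∈ upto N with q ∈ D, logTail (x ^ q.size)) := by
  have hq₀' : q₀ ∉ ({q ∈ upto (N + 1) | q ∈ D} : Finset Hierarchy) := fun h =>
    hq₀ (mem_filter.1 h).2
  have hB : ∀ q ∈ cons q₀ _ hq₀', ∀ c ∈ q.children, c ∈ ({q ∈ upto N | q ∈ D} : Finset _) := by
    intro q hq c hc
    rw [mem_filter, mem_upto]
    rcases mem_cons.1 hq with rfl | hq
    · exact ⟨(size_lt_of_mem_children hc).le.trans hN, hchildren c hc⟩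
    · rw [mem_filter, mem_upto] at hq
      exact ⟨Nat.le_of_lt_succ ((size_lt_of_mem_children hc).trans_le hq.1), hD q hq.2 c hc⟩
  have hle := sum_add_sum_le_prod hx₀ hx₁ hB
  rw [prod_inv_one_sub_pow_size hx₀ hx₁, sum_cons] at hle
  linarith

theorem IsHereditary.sum_pow_size_le (hD : IsHereditary D) (hq₀ : q₀ ∉ D)
    (hchildren : ∀ c ∈ q₀.children, c ∈ D) (hx₀ : 0 ≤ x) (hx₁ : x < 1)
    (hsum : Summable fun q : Hierarchy => logTail (x ^ q.size)) {y : ℝ}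
    (hbase : ∑ q ∈ upto q₀.size with q ∈ D, x ^ q.size ≤ y)
    (hy : Real.exp (y + ∑' q : Hierarchy, logTail (x ^ q.size)) ≤ 2 * y + (1 - x + x ^ q₀.size))
    (N : ℕ) : ∑ q ∈ upto N with q ∈ D, x ^ q.size ≤ y := by
  have hlog := logTail_pow_size_nonneg hx₀ hx₁
  have hle := le_of_supersolution (y := y)
    (t := fun k => ∑ q ∈ upto (q₀.size + k) with q ∈ D, x ^ q.size)
    (fun k => hD.sum_add_sum_le_exp hq₀ hchildren (Nat.le_add_right _ k) hx₀ hx₁)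
    (fun k => add_nonneg (sum_nonneg fun q _ => pow_nonneg hx₀ _) (tsum_nonneg hlog))
    (fun k _ => hsum.sum_le_tsum _ fun q _ => hlog q) hy hbase N
  refine (sum_le_sum_of_subset_of_nonneg ?_ fun q _ _ => pow_nonneg hx₀ _).trans hle
  intro q hq
  rw [mem_filter, mem_upto] at hq ⊢
  exact ⟨hq.1.trans (Nat.le_add_left _ _), hq.2⟩

/-- At `ρ` the inequality `exp (y + ∑' logTail) ≤ 2 * y + (1 - x)` holds for
`y = ∑' q, ρ ^ q.size`. The missing `q₀` adds `x ^ q₀.size` to the right-hand side, so there is room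
to increase `x` beyond `ρ`. -/
theorem IsHereditary.exists_gt_sum_pow_size_le (hD : IsHereditary D) (hD' : D ≠ Set.univ)
    {ρ : ℝ} (hρ₀ : 0 < ρ)
    (hsum : ∀ x, 0 ≤ x → x < ρ → Summable fun q : Hierarchy => x ^ q.size) :
    ∃ z > ρ, ∃ y, ∀ N, ∑ q ∈ upto N with q ∈ D, z ^ q.size ≤ y := by
  obtain ⟨q₀, hq₀, hchildren⟩ := exists_notMem_children_subset hD'
  have hρ₁ := lt_one_of_forall_summable hsum
  have hρ := summable_pow_size_of_forall_lt hρ₀ hsum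
  set y := ∑' q : Hierarchy, ρ ^ q.size
  have hexp : Real.exp (y + ∑' q : Hierarchy, logTail (ρ ^ q.size)) <
      2 * y + (1 - ρ + ρ ^ q₀.size) := by
    linarith [exp_tsum_add_tsum_le hρ₀.le hρ₁ hρ, pow_pos hρ₀ q₀.size]
  have hbase : ∑ q ∈ upto q₀.size with q ∈ D, ρ ^ q.size < y := by
    have hq₀' : q₀ ∉ ({q ∈ upto q₀.size | q ∈ D} : Finset Hierarchy) := fun h =>
      hq₀ (mem_filter.1 h).2
    have hcons := hρ.sum_le_tsum (cons q₀ _ hq₀') fun q _ => pow_nonneg hρ₀.le _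
    rw [sum_cons] at hcons
    linarith [pow_pos hρ₀ q₀.size]
  have hcont := continuousAt_tsum_logTail_pow_size hρ₀ hρ₁ hρ
  have hexp' : ∀ᶠ z in 𝓝 ρ, Real.exp (y + ∑' q : Hierarchy, logTail (z ^ q.size)) <
      2 * y + (1 - z + z ^ q₀.size) :=
    (continuousAt_const.add hcont).rexp.eventually_lt (by fun_prop) hexp
  have hbase' : ∀ᶠ z in 𝓝 ρ, ∑ q ∈ upto q₀.size with q ∈ D, z ^ q.size < y :=
    ContinuousAt.eventually_lt (by fun_prop) continuousAt_const hbase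
  have hsq : ∀ᶠ z in 𝓝 ρ, z ^ 2 < ρ :=
    ContinuousAt.eventually_lt (by fun_prop) continuousAt_const (by nlinarith)
  obtain ⟨z, ⟨hz₁, hzexp, hzbase, hzsq⟩, hz⟩ := (((eventually_lt_nhds hρ₁).and (hexp'.and
    (hbase'.and hsq))).filter_mono nhdsWithin_le_nhds |>.and self_mem_nhdsWithin :
      ∀ᶠ z in 𝓝[>] ρ, _).exists
  have hz₀ : 0 ≤ z := (hρ₀.trans hz).le
  exact ⟨z, hz, y, hD.sum_pow_size_le hq₀ hchildren hz₀ hz₁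
    (summable_logTail_pow_size hz₀ hz₁ (hsum _ (by positivity) hzsq)) hzbase.le hzexp.le⟩

theorem IsHereditary.tendsto_card_div_card_zero (hD : IsHereditary D) (hD' : D ≠ Set.univ) :
    Tendsto (fun n => (#{q ∈ ofSize n | q ∈ D} / #(ofSize n) : ℝ)) atTop (𝓝 0) := by
  obtain ⟨ρ, hρ₀, hle, hge⟩ := exists_radius
  obtain ⟨z, hz, y, hy⟩ := hD.exists_gt_sum_pow_size_le hD' hρ₀ fun x => summable_pow_size_of_lt hle
  obtain ⟨r, hρr, hrz⟩ := exists_between hz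
  have hr₀ := hρ₀.trans hρr
  have hz₀ := hr₀.trans hrz
  have hcard (n : ℕ) : #{q ∈ ofSize n | q ∈ D} * z ^ n ≤ y := by
    refine (card_mul_pow_le_sum hz₀.le (fun q hq => ?_) ?_).trans (hy n)
    · exact mem_ofSize.1 (mem_filter.1 hq).1
    · exact filter_subset_filter _ (filter_subset _ _)
  have hy₀ : 0 ≤ y := le_trans (by positivity) (hcard 0)
  have hlim : Tendsto (fun n => y / 2 * (r / z) ^ n) atTop (𝓝 0) := by
    simpa using (tendsto_pow_atTop_nhds_zero_of_lt_one (by positivity)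
      ((div_lt_one hz₀).2 hrz)).const_mul (y / 2)
  refine squeeze_zero' (.of_forall fun n => by positivity) ?_ hlim
  filter_upwards [hge r hρr] with n hn
  calc (#{q ∈ ofSize n | q ∈ D} / #(ofSize n) : ℝ)
    _ ≤ (y / z ^ n) / (2 / r ^ n) := by
      have hn₁ := (div_le_iff₀ (by positivity)).2 hn
      have hn₂ := (le_div_iff₀ (by positivity)).2 (hcard n)
      gcongr
    _ = y / 2 * (r / z) ^ n := by
      rw [div_pow]
      field_simp

end Hierarchy

/-- For every hierarchy `S` of size `m ≥ 2`, the proportion of (isomorphism classes of)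
hierarchies of size `n` avoiding `S` tends to `0` as `n → ∞`. -/
theorem avoidCount_div_hierarchyCount_tendsto_zero {m : ℕ} (hm : 2 ≤ m) (S : RTree)
    (hS : S.IsHierarchy) (hSm : S.leaves = m) :
    Filter.Tendsto (fun n : ℕ => (avoidCount S n : ℝ) / (hierarchyCount n : ℝ))
      Filter.atTop (nhds 0) := by
  classical
  have hne : Hierarchy.avoiders S ≠ Set.univ := fun h =>
    Hierarchy.ofTree_notMem_avoiders S hS (h ▸ Set.mem_univ _)
  simpa only [Hierarchy.avoidCount_eq, Hierarchy.hierarchyCount_eq] using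
    (Hierarchy.isHereditary_avoiders S).tendsto_card_div_card_zero hne
end

section
/- (Lazzarin–Márquez–Tura) If G and H are threshold graphs on the same number of vertices that are cospectral, then G and H are isomorphic. In other words, no threshold graph has a cospectral mate within the family of threshold graphs. -/
open SimpleGraph

/-- The characteristic polynomial (over `ℝ`) of the adjacency matrix of a finite graph. -/
noncomputable def adjCharPoly {V : Type} [Fintype V] [DecidableEq V] (G : SimpleGraph V) :
    Polynomial ℝ :=
  letI := Classical.decRel G.Adj
  Matrix.charpoly (G.adjMatrix ℝ)

/-- Two finite graphs are cospectral if their adjacency matrices have the same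
characteristic polynomial. -/
def Cospectral {V W : Type} [Fintype V] [DecidableEq V] [Fintype W] [DecidableEq W]
    (G : SimpleGraph V) (H : SimpleGraph W) : Prop :=
  adjCharPoly G = adjCharPoly H

/-- Generalized cospectrality: the graphs are cospectral and so are their complements. -/
def GenCospectral {V W : Type} [Fintype V] [DecidableEq V] [Fintype W] [DecidableEq W]
    (G : SimpleGraph V) (H : SimpleGraph W) : Prop :=
  Cospectral G H ∧ Cospectral Gᶜ Hᶜ

/-- A cograph is a graph with no induced path `P₄` (on 4 vertices). -/
def IsCograph {V : Type} (G : SimpleGraph V) : Prop :=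
  ¬ ∃ f : Fin 4 ↪ V, ∀ i j, G.Adj (f i) (f j) ↔ (SimpleGraph.pathGraph 4).Adj i j

/-- The number of isomorphism classes of graphs on `n` vertices satisfying an
isomorphism-invariant property `P`. -/
noncomputable def classCount (n : ℕ) (P : SimpleGraph (Fin n) → Prop) : ℕ :=
  Nat.card (Quot fun G H : {G : SimpleGraph (Fin n) // P G} => Nonempty (G.1 ≃g H.1))

/-- A threshold graph: it can be built from a single vertex by repeatedly adding either an
isolated vertex or a dominating vertex. Equivalently, there is an ordering
`σ 0, σ 1, …, σ (n-1)` of the vertices such that each vertex is isolated or dominating in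
the subgraph induced on it and the earlier vertices. -/
def IsThreshold {n : ℕ} (G : SimpleGraph (Fin n)) : Prop :=
  1 ≤ n ∧ ∃ σ : Equiv.Perm (Fin n), ∀ i : Fin n,
    (∀ j < i, ¬ G.Adj (σ i) (σ j)) ∨ (∀ j < i, G.Adj (σ i) (σ j))

/-!
Adding a vertex that is isolated or dominating changes the pair
`(det (x • 1 - A + J), det (x • 1 - A))`, with `J` the all-ones matrix, by a `2 × 2` matrix over
`ℤ[x]`. At a primitive cube root of unity `x = w` these two matrices become, in a suitable basis,
`w • !![1, 1; 0, 1]` and `(w + 1) • !![1, 0; 1, 1]`. The two unipotent matrices generate a free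
monoid, and a creation sequence of known length can be read off from the second row of its product
by the Euclidean algorithm.
The characteristic polynomial at `w` contains that row `(d, c)` in the form `u * (c + d * w)`, with
`u` a power of the sixth root of unity `w + 1`. The integers `0 ≤ d < c` are then determined,
because `c + d * w` lies in a half-open sector of angle `π / 3`.
-/

namespace ThresholdGraph

open Matrix

section BorderedMatrix

variable {R m : Type*} [DecidableEq m]

/-- The bordered matrix `[[M, u], [v, d]]`, where the column `u`, the row `v` and the corner `d`
are added to `M`. It describes what a new vertex does to a matrix attached to a graph. -/
def bordered (M : Matrix m m R) (u v : m → R) (d : R) : Matrix (m ⊕ Unit) (m ⊕ Unit) R :=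
  fromBlocks M (replicateCol Unit u) (replicateRow Unit v) (of fun _ _ => d)

lemma updateRow_bordered (M : Matrix m m R) (u v v' : m → R) (d d' : R) :
    (bordered M u v d).updateRow (Sum.inr ()) (Sum.elim v' fun _ => d') = bordered M u v' d' := by
  ext (i | i) (j | j) <;> simp [bordered, updateRow_apply]

variable [CommRing R] [Fintype m]

lemma det_bordered_zero_row (M : Matrix m m R) (u : m → R) (d : R) :
    (bordered M u 0 d).det = d * M.det := by
  simp [bordered, mul_comm]

lemma det_bordered_one (M : Matrix m m R) (u v : m → R) :
    (bordered M u v 1).det = (M - vecMulVec u v).det := by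
  have corner : (of fun _ _ => 1 : Matrix Unit Unit R) = 1 := by ext; simp
  rw [bordered, corner, det_fromBlocks_one₂₂, ← vecMulVec_eq]

lemma det_bordered_eq_add_det_sub (M : Matrix m m R) (u v : m → R) (d : R) :
    (bordered M u v d).det = (d - 1) * M.det + (M - vecMulVec u v).det := by
  have row : (Sum.elim v fun _ => d : m ⊕ Unit → R) =
      Sum.elim (0 : m → R) (fun _ : Unit => d - 1) + Sum.elim v fun _ => 1 := by
    ext (i | i) <;> simp
  rw [← updateRow_bordered M u v v d d, row, det_updateRow_add, updateRow_bordered,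
    updateRow_bordered, det_bordered_zero_row, det_bordered_one]

lemma det_bordered_neg (M : Matrix m m R) (u v : m → R) (d : R) :
    (bordered M u (-v) (-d)).det = -(bordered M u v d).det := by
  have row : (Sum.elim (-v) fun _ => -d : m ⊕ Unit → R) =
      (-1 : R) • Sum.elim v fun _ => d := by
    ext (i | i) <;> simp
  rw [← updateRow_bordered M u v (-v) d (-d), row, det_updateRow_smul, updateRow_bordered,
    neg_one_mul]

lemma det_bordered_eq_sub_det_add (M : Matrix m m R) (u v : m → R) (d : R) :
    (bordered M u v d).det = (d + 1) * M.det - (M + vecMulVec u v).det := by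
  have h := det_bordered_eq_add_det_sub M u (-v) (-d)
  rw [det_bordered_neg, vecMulVec_neg, sub_neg_eq_add] at h
  linear_combination -h

end BorderedMatrix

section DetPair

variable {R V W : Type*} [CommRing R] [Fintype V] [DecidableEq V] [Fintype W] [DecidableEq W]

/-- The pair `(det (x • 1 - A + J), det (x • 1 - A))` for the adjacency matrix `A` of `G` and the
all-ones matrix `J`, encoded as `vecMulVec 1 1`. Unlike the characteristic polynomial alone, it
can be computed vertex by vertex for a threshold graph. -/
def detPair (x : R) (G : SimpleGraph V) [DecidableRel G.Adj] : R × R :=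
  ((scalar V x - G.adjMatrix R + vecMulVec 1 1).det, (scalar V x - G.adjMatrix R).det)

lemma aeval_adjCharPoly {V : Type} [Fintype V] [DecidableEq V] [Algebra ℝ R] (x : R)
    (G : SimpleGraph V) [DecidableRel G.Adj] :
    Polynomial.aeval x (adjCharPoly G) = (detPair x G).2 := by
  have map_adjMatrix : (G.adjMatrix ℝ).map (algebraMap ℝ R) = G.adjMatrix R := by
    ext i j
    simp [adjMatrix_apply, apply_ite (algebraMap ℝ R)]
  have charpoly_eq : adjCharPoly G = (G.adjMatrix ℝ).charpoly := by
    unfold adjCharPoly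
    congr!
  rw [charpoly_eq, ← Polynomial.eval_map_algebraMap, ← charpoly_map, map_adjMatrix, eval_charpoly,
    detPair]

lemma detPair_eq_of_iso (x : R) {G : SimpleGraph V} {H : SimpleGraph W} [DecidableRel G.Adj]
    [DecidableRel H.Adj] (e : G ≃g H) : detPair x G = detPair x H := by
  have reindex_scalar : (scalar V x).submatrix e.symm e.symm = scalar W x := by
    ext i j
    simp [scalar_apply, diagonal_apply]
  have reindex_adj : (G.adjMatrix R).submatrix e.symm e.symm = H.adjMatrix R :=
    e.reindex_adjMatrix R
  simp only [detPair]
  rw [← det_submatrix_equiv_self e.symm.toEquiv, ← det_submatrix_equiv_self e.symm.toEquiv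
    (scalar V x - G.adjMatrix R), ← reindex_scalar, ← reindex_adj]
  rfl

/-- The effect on `detPair` of adding a dominating (`true`) or an isolated (`false`) vertex. -/
def transfer (x : R) : R × R → Bool → R × R
  | (q, p), true => ((x + 1) * q, (x + 1) * p - q)
  | (q, p), false => (x * q + p, x * p)

lemma detPair_sum_unit (x : R) {G : SimpleGraph V} {H : SimpleGraph (V ⊕ Unit)}
    [DecidableRel G.Adj] [DecidableRel H.Adj] {b : Bool}
    (hG : ∀ v w, H.Adj (Sum.inl v) (Sum.inl w) ↔ G.Adj v w)
    (hb : ∀ v, H.Adj (Sum.inl v) (Sum.inr ()) ↔ b = true) :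
    detPair x H = transfer x (detPair x G) b := by
  have hb' (v) : H.Adj (Sum.inr ()) (Sum.inl v) ↔ b = true := by rw [H.adj_comm, hb]
  let u : V → R := fun _ => -if b then 1 else 0
  have char_eq : scalar (V ⊕ Unit) x - H.adjMatrix R =
      bordered (scalar V x - G.adjMatrix R) u u x := by
    ext (i | i) (j | j) <;>
      simp [bordered, u, adjMatrix_apply, hG, hb, hb', diagonal_apply]
  have shifted_eq : scalar (V ⊕ Unit) x - H.adjMatrix R + vecMulVec 1 1 =
      bordered (scalar V x - G.adjMatrix R + vecMulVec 1 1) (u + 1) (u + 1) (x + 1) := by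
    rw [char_eq]
    ext (i | i) (j | j) <;> simp [bordered, vecMulVec]
  rw [detPair, shifted_eq, char_eq]
  cases b with
  | true =>
    have hu : u = -1 := by ext; simp [u]
    rw [hu, neg_add_cancel, det_bordered_zero_row, det_bordered_eq_sub_det_add, neg_vecMulVec,
      vecMulVec_neg, neg_neg, detPair, transfer]
  | false =>
    have hu : u = 0 := by ext; simp [u]
    rw [hu, zero_add, det_bordered_eq_add_det_sub, det_bordered_zero_row, add_sub_cancel_right,
      add_sub_cancel_right, detPair, transfer]

end DetPair

section CreationGraph

/-- The threshold graph with creation sequence `f`: vertex `i` is added as a dominating vertex if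
`f i` is `true`, and as an isolated vertex otherwise. The value of `f` at the first vertex has no
effect. -/
def creationGraph {n : ℕ} (f : Fin n → Bool) : SimpleGraph (Fin n) where
  Adj i j := i ≠ j ∧ f (max i j) = true
  symm := ⟨fun i j h => ⟨h.1.symm, max_comm i j ▸ h.2⟩⟩
  loopless := ⟨fun _ h => h.1 rfl⟩

instance {n : ℕ} (f : Fin n → Bool) : DecidableRel (creationGraph f).Adj :=
  fun i j => inferInstanceAs (Decidable (i ≠ j ∧ f (max i j) = true))

lemma creationGraph_adj {n : ℕ} {f : Fin n → Bool} {i j : Fin n} :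
    (creationGraph f).Adj i j ↔ i ≠ j ∧ f (max i j) = true :=
  Iff.rfl

lemma creationGraph_adj_of_lt {n : ℕ} {f : Fin n → Bool} {i j : Fin n} (h : j < i) :
    (creationGraph f).Adj i j ↔ f i = true := by
  simp [creationGraph_adj, h.ne', max_eq_left h.le]

lemma exists_creationGraph_iso {n : ℕ} {G : SimpleGraph (Fin (n + 1))} (hG : IsThreshold G) :
    ∃ f : Fin (n + 1) → Bool, f 0 = false ∧ Nonempty (creationGraph f ≃g G) := by
  classical
  obtain ⟨-, σ, hσ⟩ := hG
  let f : Fin (n + 1) → Bool := fun i => decide (i ≠ 0 ∧ ∀ j < i, G.Adj (σ i) (σ j))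
  have adj_iff_of_lt {i j} (hji : j < i) :
      G.Adj (σ i) (σ j) ↔ (creationGraph f).Adj i j := by
    rw [creationGraph_adj_of_lt hji, decide_eq_true_iff]
    refine ⟨fun h => ⟨Fin.ne_zero_of_lt hji, ?_⟩, fun h => h.2 j hji⟩
    exact (hσ i).resolve_left fun isolated => isolated j hji h
  refine ⟨f, by simp [f], ⟨σ, fun {i j} => ?_⟩⟩
  rcases lt_trichotomy i j with hij | rfl | hji
  · rw [G.adj_comm, (creationGraph f).adj_comm]
    exact adj_iff_of_lt hij
  · simp
  · exact adj_iff_of_lt hji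

variable {R : Type*} [CommRing R]

lemma detPair_creationGraph_succ (x : R) {n : ℕ} (f : Fin (n + 1) → Bool) :
    detPair x (creationGraph f) =
      transfer x (detPair x (creationGraph fun i => f i.castSucc)) (f (Fin.last n)) := by
  let e : Fin n ⊕ Unit ≃ Fin (n + 1) :=
    (finSuccEquivLast.trans (Equiv.optionEquivSumPUnit (Fin n))).symm
  have e_inl (i) : e (Sum.inl i) = i.castSucc := by simp [e]
  have e_inr : e (Sum.inr ()) = Fin.last n := by simp [e]
  rw [← detPair_eq_of_iso x (SimpleGraph.Iso.comap e (creationGraph f))]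
  refine detPair_sum_unit x (fun i j => ?_) fun i => ?_
  · simp only [comap_adj, e_inl, creationGraph_adj, ne_eq, Fin.castSucc_inj,
      Fin.strictMono_castSucc.monotone.map_max]
  · rw [comap_adj, e_inl, e_inr, SimpleGraph.adj_comm,
      creationGraph_adj_of_lt (Fin.castSucc_lt_last i)]

lemma detPair_creationGraph (x : R) {n : ℕ} (f : Fin n → Bool) :
    detPair x (creationGraph f) = (List.ofFn f).foldl (transfer x) (1, 1) := by
  induction n with
  | zero => simp [detPair]
  | succ n ih => rw [detPair_creationGraph_succ, ih, List.ofFn_succ_last, List.foldl_concat]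

end CreationGraph

section CalkinWilf

/-- The pair `(d, c)` reached from `(0, 1)` by reading the word from right to left, the letter
`true` adding the second entry to the first and `false` the first to the second. For pairs with
`d ≠ 0` these are the moves of the Calkin–Wilf tree. -/
def calkinWilf : List Bool → ℕ × ℕ
  | [] => (0, 1)
  | true :: l => ((calkinWilf l).1 + (calkinWilf l).2, (calkinWilf l).2)
  | false :: l => ((calkinWilf l).1, (calkinWilf l).1 + (calkinWilf l).2)

lemma calkinWilf_snd_pos (l : List Bool) : 0 < (calkinWilf l).2 := by
  induction l with
  | nil => simp [calkinWilf]
  | cons b l ih => cases b <;> simp only [calkinWilf] <;> omega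

lemma calkinWilf_false_cons_lt (l : List Bool) :
    (calkinWilf (false :: l)).1 < (calkinWilf (false :: l)).2 :=
  Nat.lt_add_of_pos_right (calkinWilf_snd_pos l)

lemma calkinWilf_cons_inj {b b' : Bool} {l l' : List Bool}
    (h : calkinWilf (b :: l) = calkinWilf (b' :: l')) : b = b' ∧ calkinWilf l = calkinWilf l' := by
  have hl := calkinWilf_snd_pos l
  have hl' := calkinWilf_snd_pos l'
  cases b <;> cases b' <;>
    simp only [calkinWilf, Prod.ext_iff, reduceCtorEq, true_and, false_and] at h ⊢ <;> omega

lemma eq_of_calkinWilf_eq {l l' : List Bool} (hlen : l.length = l'.length)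
    (h : calkinWilf l = calkinWilf l') : l = l' := by
  induction l generalizing l' with
  | nil => exact (List.length_eq_zero_iff.1 hlen.symm).symm
  | cons b l ih =>
    cases l' with
    | nil => simp at hlen
    | cons b' l' =>
      obtain ⟨rfl, hpair⟩ := calkinWilf_cons_inj h
      rw [ih (Nat.succ_injective hlen) hpair]

end CalkinWilf

section CubeRoot

variable {R : Type*} [CommRing R] {w : R}

lemma sq_add_self_add_one_eq_zero [IsDomain R] (hw : IsPrimitiveRoot w 3) :
    w ^ 2 + w + 1 = 0 := by
  have geom_sum := hw.geom_sum_eq_zero (by simp)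
  simp only [Finset.sum_range_succ, Finset.sum_range_zero] at geom_sum
  linear_combination geom_sum

lemma foldl_transfer_snd (hw : w ^ 2 + w + 1 = 0) (l : List Bool) :
    ∃ k : ℕ, ∀ p : R × R, (l.foldl (transfer w) p).2 =
      (w + 1) ^ k * ((calkinWilf l).2 * p.2 + (calkinWilf l).1 * w * p.1) := by
  induction l with
  | nil => exact ⟨0, fun p => by simp [calkinWilf]⟩
  | cons b l ih =>
    obtain ⟨k, hk⟩ := ih
    cases b with
    | true =>
      refine ⟨k + 1, fun p => ?_⟩
      rw [List.foldl_cons, hk]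
      simp only [transfer, calkinWilf]
      push_cast
      linear_combination -(w + 1) ^ k * (calkinWilf l).2 * p.1 * hw
    | false =>
      refine ⟨k + 2, fun p => ?_⟩
      have sq_eq : (w + 1) ^ 2 = w := by linear_combination hw
      rw [List.foldl_cons, hk, pow_add, sq_eq]
      simp only [transfer, calkinWilf]
      push_cast
      ring

lemma add_one_pow_eq (hw : w ^ 2 + w + 1 = 0) (k : ℕ) :
    ∃ p ∈ ({(1, 0), (1, 1), (0, 1), (-1, 0), (-1, -1), (0, -1)} : Finset (ℤ × ℤ)),
      (w + 1) ^ k = p.1 + p.2 * w := by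
  induction k with
  | zero => exact ⟨(1, 0), by simp, by simp⟩
  | succ k ih =>
    obtain ⟨p, hp, hk⟩ := ih
    refine ⟨(p.1 - p.2, p.1), ?_, ?_⟩
    · fin_cases hp <;> decide
    · rw [pow_succ, hk]
      push_cast
      linear_combination p.2 * hw

variable [CharZero R]

lemma eq_zero_of_intCast_add_mul_eq_zero (hw : w ^ 2 + w + 1 = 0) {a b : ℤ}
    (h : (a : R) + b * w = 0) : a = 0 ∧ b = 0 := by
  have norm_eq_zero : a ^ 2 - a * b + b ^ 2 = 0 := by
    have : ((a ^ 2 - a * b + b ^ 2 : ℤ) : R) = 0 := by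
      push_cast
      linear_combination (a - b - b * w) * h + b ^ 2 * hw
    exact_mod_cast this
  constructor
  · exact pow_eq_zero_iff two_ne_zero |>.1 (by nlinarith [sq_nonneg (2 * b - a), sq_nonneg a])
  · exact pow_eq_zero_iff two_ne_zero |>.1 (by nlinarith [sq_nonneg (2 * a - b), sq_nonneg b])

lemma eq_of_pow_mul_eq (hw : w ^ 2 + w + 1 = 0) {k c d c' d' : ℕ} (hdc : d < c) (hdc' : d' < c')
    (h : (w + 1) ^ k * (c + d * w) = c' + d' * w) : c = c' ∧ d = d' := by
  obtain ⟨⟨a, b⟩, hab, hpow⟩ := add_one_pow_eq hw k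
  rw [hpow] at h
  have coords := eq_zero_of_intCast_add_mul_eq_zero hw
    (a := a * c - b * d - c') (b := a * d + b * c - b * d - d') (by
      push_cast
      linear_combination h - b * d * hw)
  simp only [Finset.mem_insert, Finset.mem_singleton, Prod.mk.injEq] at hab
  rcases hab with ⟨rfl, rfl⟩ | ⟨rfl, rfl⟩ | ⟨rfl, rfl⟩ | ⟨rfl, rfl⟩ | ⟨rfl, rfl⟩ | ⟨rfl, rfl⟩ <;>
    omega

lemma eq_of_pow_mul_eq_pow_mul (hw : w ^ 2 + w + 1 = 0) {k k' c d c' d' : ℕ} (hdc : d < c)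
    (hdc' : d' < c') (h : (w + 1) ^ k * (c + d * w) = (w + 1) ^ k' * (c' + d' * w)) :
    c = c' ∧ d = d' := by
  wlog hk : k' ≤ k generalizing k k' c d c' d'
  · exact (this hdc' hdc h.symm (le_of_not_ge hk)).imp Eq.symm Eq.symm
  have isUnit_add_one : IsUnit (w + 1) :=
    IsUnit.of_mul_eq_one (-w) (by linear_combination -hw)
  obtain ⟨j, rfl⟩ := Nat.exists_eq_add_of_le hk
  rw [pow_add, mul_assoc] at h
  exact eq_of_pow_mul_eq hw hdc hdc' ((isUnit_add_one.pow k').mul_left_cancel h)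

theorem eq_of_detPair_creationGraph_snd_eq (hw : w ^ 2 + w + 1 = 0) {n : ℕ}
    {f g : Fin (n + 1) → Bool} (hf : f 0 = false) (hg : g 0 = false)
    (h : (detPair w (creationGraph f)).2 = (detPair w (creationGraph g)).2) : f = g := by
  have fst_lt_snd {f : Fin (n + 1) → Bool} (hf : f 0 = false) :
      (calkinWilf (List.ofFn f)).1 < (calkinWilf (List.ofFn f)).2 := by
    rw [List.ofFn_succ, hf]
    exact calkinWilf_false_cons_lt _
  obtain ⟨k, hk⟩ := foldl_transfer_snd hw (List.ofFn f)
  obtain ⟨k', hk'⟩ := foldl_transfer_snd hw (List.ofFn g)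
  rw [detPair_creationGraph, detPair_creationGraph, hk, hk'] at h
  simp only [mul_one] at h
  have hpair := eq_of_pow_mul_eq_pow_mul hw (fst_lt_snd hf) (fst_lt_snd hg) h
  exact List.ofFn_injective (eq_of_calkinWilf_eq (by simp) (Prod.ext hpair.2 hpair.1))

end CubeRoot

end ThresholdGraph

open ThresholdGraph in
/-- **Lazzarin–Márquez–Tura.** Cospectral threshold graphs are isomorphic: no threshold
graph has a cospectral mate within the family of threshold graphs. -/
theorem threshold_cospectral_implies_isomorphic {n : ℕ} (G H : SimpleGraph (Fin n))
    (hG : IsThreshold G) (hH : IsThreshold H) (h : Cospectral G H) :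
    Nonempty (G ≃g H) := by
  classical
  obtain ⟨m, rfl⟩ := Nat.exists_eq_add_of_le' hG.1
  obtain ⟨f, hf, ⟨eG⟩⟩ := exists_creationGraph_iso hG
  obtain ⟨g, hg, ⟨eH⟩⟩ := exists_creationGraph_iso hH
  obtain ⟨w, hw⟩ : ∃ w : ℂ, IsPrimitiveRoot w 3 :=
    ⟨_, Complex.isPrimitiveRoot_exp 3 three_ne_zero⟩
  have hdet : (detPair w (creationGraph f)).2 = (detPair w (creationGraph g)).2 := by
    rw [detPair_eq_of_iso w eG, detPair_eq_of_iso w eH, ← aeval_adjCharPoly, ← aeval_adjCharPoly, h]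
  obtain rfl := eq_of_detPair_creationGraph_snd_eq (sq_add_self_add_one_eq_zero hw) hf hg hdet
  exact ⟨eG.symm.trans eH⟩
end
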